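/- Let G be a nontrivial finite group with a nonaxial 3D-rotation module. Then G is isomorphic to Alt(4), Sym(4), or Alt(5), and the centralizer of each axis is cyclic. -/

import Mathlib

open Pointwise

/-- A 3D-rotation module: each nontrivial `g` has a nontrivial axis `A_g ≤ V` such that
(1) `h • A_g = A_{hgh⁻¹}`, (2) `h` centralizes `A_g` iff `A_h = A_g`, and
(3) elements of `N_G(A_g) \ C_G(A_g)` invert `A_g`. -/
structure Rotation3DModule (G : Type*) [Group G] (V : Type*) [AddCommGroup V]
    [DistribMulAction G V] where
  axis : G → AddSubgroup V
  axis_ne_bot : ∀ g : G, g ≠ 1 → axis g ≠ ⊥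
  axis_conj : ∀ g h : G, g ≠ 1 → h ≠ 1 → h • axis g = axis (h * g * h⁻¹)
  cent_iff : ∀ g h : G, g ≠ 1 → h ≠ 1 → ((∀ v ∈ axis g, h • v = v) ↔ axis h = axis g)
  norm_inverts : ∀ g h : G, g ≠ 1 → h ≠ 1 → h • axis g = axis g →
    ¬ (∀ v ∈ axis g, h • v = v) → ∀ v ∈ axis g, h • v = -v

/-- The centralizer `C_G(A)` of a subgroup `A ≤ V` inside `G`. -/
def axisCent (G : Type*) [Group G] {V : Type*} [AddCommGroup V] [DistribMulAction G V]
    (A : AddSubgroup V) : Subgroup G where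
  carrier := {h : G | ∀ v ∈ A, h • v = v}
  one_mem' := fun v _ => one_smul G v
  mul_mem' := by
    intro a b ha hb v hv
    rw [mul_smul, hb v hv, ha v hv]
  inv_mem' := by
    intro a ha v hv
    conv_lhs => rw [← ha v hv]
    rw [inv_smul_smul]

/-- The normalizer `N_G(A)` of a subgroup `A ≤ V` inside `G`, i.e. the stabilizer of `A`
under the pointwise action of `G` on subgroups of `V`. -/
def axisNorm (G : Type*) [Group G] {V : Type*} [AddCommGroup V] [DistribMulAction G V]
    (A : AddSubgroup V) : Subgroup G := MulAction.stabilizer G A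

open MulAction

structure RotPart (G X : Type*) [Group G] [MulAction G X] where
  C : X → Subgroup G
  ex : ∀ g : G, g ≠ 1 → ∃ x, g ∈ C x
  uniq : ∀ g : G, g ≠ 1 → ∀ x y, g ∈ C x → g ∈ C y → x = y
  nb : ∀ x, ∃ g ∈ C x, g ≠ 1
  conj : ∀ (g h : G) (x : X), g ∈ C x → h * g * h⁻¹ ∈ C (h • x)
  le : ∀ x, C x ≤ stabilizer G x
  mul : ∀ x, ∀ a ∈ stabilizer G x, ∀ b ∈ stabilizer G x, a ∉ C x → b ∉ C x → a * b ∈ C x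
  nofix : ∀ x : X, ∃ h : G, h • x ≠ x

set_option linter.unusedSectionVars false
namespace RotPart
variable {G X : Type*} [Group G] [MulAction G X] [Finite G] [Finite X] (P : RotPart G X)

lemma idx (x : X) : ∃ e : ℕ, (e = 1 ∨ e = 2) ∧ Nat.card (stabilizer G x) = e * Nat.card (P.C x) := by
  have h : (P.C x).relIndex (stabilizer G x) = 1 ∨ (P.C x).relIndex (stabilizer G x) = 2 := by
    by_cases hle : stabilizer G x ≤ P.C x
    · left; exact Subgroup.relIndex_eq_one.2 hle
    · right
      obtain ⟨a, ha, hac⟩ := SetLike.not_le_iff_exists.1 hle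
      rw [Subgroup.relIndex, Subgroup.index_eq_two_iff]
      refine ⟨⟨a, ha⟩, fun b => ?_⟩
      simp only [Subgroup.mem_subgroupOf, Subgroup.coe_mul]
      by_cases hb : (b : G) ∈ P.C x
      · right
        refine ⟨hb, fun h => hac ?_⟩
        exact ((P.C x).mul_mem_cancel_left hb).1 h
      · left
        exact ⟨P.mul x b b.2 a ha hb hac, hb⟩
  refine ⟨_, h, ?_⟩
  rw [← Subgroup.relIndex_bot_left, ← Subgroup.relIndex_bot_left, mul_comm]
  exact (Subgroup.relIndex_mul_relIndex _ _ _ bot_le (P.le x)).symm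

lemma conj_iff (g h : G) (x : X) : h * g * h⁻¹ ∈ P.C (h • x) ↔ g ∈ P.C x := by
  refine ⟨fun H => ?_, P.conj g h x⟩
  have := P.conj _ h⁻¹ _ H
  simpa [mul_assoc] using this

lemma card_inf_smul (N : Subgroup G) [hN : N.Normal] (h : G) (x : X) :
    Nat.card (P.C (h • x) ⊓ N : Subgroup G) = Nat.card (P.C x ⊓ N : Subgroup G) := by
  symm
  refine Nat.card_congr ((MulAut.conj h).toEquiv.subtypeEquiv ?_)
  intro g
  simp only [Subgroup.mem_inf, MulEquiv.toEquiv_eq_coe, EquivLike.coe_coe, MulAut.conj_apply,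
    P.conj_iff, hN.mem_comm_iff (a := h * g)]
  simp

lemma card_smul (h : G) (x : X) :
    Nat.card (P.C (h • x)) = Nat.card (P.C x) := by
  simpa using P.card_inf_smul ⊤ h x

lemma count (N : Subgroup G) [N.Normal] [Fintype (orbitRel.Quotient G X)] :
    Nat.card N = 1 + ∑ w : orbitRel.Quotient G X,
      Nat.card (orbit G w.out) * (Nat.card (P.C w.out ⊓ N : Subgroup G) - 1) := by
  classical
  have := Fintype.ofFinite G
  have := Fintype.ofFinite X
  have h0 : ∀ H : Subgroup G, Nat.card H - 1 = (Finset.univ.filter fun g => g ∈ H ∧ g ≠ 1).card := by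
    intro H
    have : (Finset.univ.filter fun g => g ∈ H ∧ g ≠ 1) = (Finset.univ.filter fun g => g ∈ H).erase 1 := by
      ext g; simp [and_comm]
    rw [this, Finset.card_erase_of_mem (by simp [H.one_mem])]
    congr 1
    rw [Nat.card_eq_fintype_card, Fintype.card_subtype]
  have h1 : Nat.card N - 1 = ∑ x : X, (Nat.card (P.C x ⊓ N : Subgroup G) - 1) := by
    simp_rw [h0]
    rw [← Finset.card_biUnion]
    · congr 1
      ext g
      simp only [Finset.mem_filter, Finset.mem_univ, true_and, Finset.mem_biUnion, Subgroup.mem_inf]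
      constructor
      · rintro ⟨a, b⟩
        obtain ⟨x, hx⟩ := P.ex g b
        exact ⟨x, ⟨hx, a⟩, b⟩
      · rintro ⟨x, ⟨_, a⟩, b⟩
        exact ⟨a, b⟩
    · intro x _ y _ hxy
      simp only [Function.onFun]
      rw [Finset.disjoint_left]
      intro g hg hg'
      simp only [Finset.mem_filter, Finset.mem_univ, true_and, Subgroup.mem_inf] at hg hg'
      exact hxy (P.uniq g hg.2 x y hg.1.1 hg'.1.1)
  have h2 : ∑ x : X, (Nat.card (P.C x ⊓ N : Subgroup G) - 1) =
     ∑ w : orbitRel.Quotient G X,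
      Nat.card (orbit G w.out) * (Nat.card (P.C w.out ⊓ N : Subgroup G) - 1) := by
    rw [← Equiv.sum_comp (selfEquivSigmaOrbits G X).symm, Fintype.sum_sigma]
    refine Finset.sum_congr rfl fun w _ => ?_
    rw [Nat.card_eq_fintype_card, ← smul_eq_mul, ← Finset.card_univ, ← Finset.sum_const]
    refine Finset.sum_congr rfl fun y _ => ?_
    have : (selfEquivSigmaOrbits G X).symm ⟨w, y⟩ = (y : X) := rfl
    rw [this]
    obtain ⟨_, h, rfl⟩ := y
    simp only [P.card_inf_smul]
  have : 0 < Nat.card N := Nat.card_pos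
  omega

lemma two_le (x : X) : 2 ≤ Nat.card (P.C x) := by
  obtain ⟨g, hg, h1⟩ := P.nb x
  have : Nontrivial (P.C x) := ⟨⟨⟨g, hg⟩, 1, fun h => h1 (congrArg Subtype.val h)⟩⟩
  exact Finite.one_lt_card

lemma orb_two_le (P : RotPart G X) (x : X) : 2 ≤ Nat.card (orbit G x) := by
  obtain ⟨g, hg⟩ := P.nofix x
  have : Nontrivial (orbit G x) := ⟨⟨⟨g • x, mem_orbit x g⟩, ⟨x, mem_orbit_self x⟩,
    fun h => hg (congrArg Subtype.val h)⟩⟩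
  exact Finite.one_lt_card

lemma orb_mul (x : X) : Nat.card (orbit G x) * Nat.card (stabilizer G x) = Nat.card G := by
  rw [← Nat.card_prod]
  exact Nat.card_congr (orbitProdStabilizerEquivGroup G x)

lemma not_central (P : RotPart G X) (z : G) (hz : z ≠ 1) : ∃ h : G, h * z * h⁻¹ ≠ z := by
  obtain ⟨x, hx⟩ := P.ex z hz
  obtain ⟨h, hh⟩ := P.nofix x
  refine ⟨h, fun H => hh ?_⟩
  have := P.conj z h x hx
  rw [H] at this
  exact P.uniq z hz _ _ this hx

/-- action on the orbit is faithful if the axis centralizer has order three -/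
lemma faithful3 (x : X) (hx : Nat.card (P.C x) = 3) :
    Function.Injective (toPermHom G (orbit G x)) := by
  rw [injective_iff_map_eq_one]
  have key : ∀ k : G, toPermHom G (orbit G x) k = 1 → ∀ y ∈ orbit G x, k ∈ stabilizer G y := by
    intro k hk y hy
    have := congrArg (fun f => (f ⟨y, hy⟩ : orbit G x)) hk
    exact congrArg Subtype.val this
  have hsq : ∀ k : G, toPermHom G (orbit G x) k = 1 → k * k = 1 := by
    intro k hk
    have h1 : ∀ y ∈ orbit G x, k * k ∈ P.C y := by
      intro y hy
      by_cases h : k ∈ P.C y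
      · exact mul_mem h h
      · exact P.mul y k (key k hk y hy) k (key k hk y hy) h h
    by_contra hne
    obtain ⟨h, hh⟩ := P.nofix x
    exact hh (P.uniq _ hne _ _ (h1 _ (mem_orbit x h)) (h1 x (mem_orbit_self x)))
  have hC : ∀ k : G, toPermHom G (orbit G x) k = 1 → k ∈ P.C x → k = 1 := by
    intro k hk hkx
    have h1 : k ^ 2 = 1 := by rw [pow_two]; exact hsq k hk
    have h2 : k ^ 3 = 1 := by
      have := pow_card_eq_one' (x := (⟨k, hkx⟩ : P.C x))
      rw [hx] at this
      exact congrArg Subtype.val this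
    rwa [pow_succ, h1, one_mul] at h2
  intro k hk
  by_contra hne
  obtain ⟨h, hh⟩ := P.not_central k hne
  have hk' : toPermHom G (orbit G x) (h * k * h⁻¹) = 1 := by
    rw [map_mul, map_mul, hk, mul_one, ← map_mul, mul_inv_cancel, map_one]
  have hne' : h * k * h⁻¹ ≠ 1 := by simpa using hne
  have hm : (h * k * h⁻¹) * k ∈ P.C x :=
    P.mul x _ (key _ hk' x (mem_orbit_self x)) k (key _ hk x (mem_orbit_self x))
      (fun H => hne' (hC _ hk' H)) (fun H => hne (hC _ hk H))
  have h3 := hC _ (by rw [map_mul, hk', hk, one_mul]) hm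
  have h4 := hsq k hk
  exact hh (mul_right_cancel (h3.trans h4.symm))

end RotPart

lemma alt_of_inj {G Y : Type*} [Group G] [Finite G] (m : ℕ) (hm : 2 ≤ m) (hY : Nat.card Y = m)
    (f : G →* Equiv.Perm Y) (hf : Function.Injective f) (hc : 2 * Nat.card G = m.factorial) :
    Nonempty (G ≃* alternatingGroup (Fin m)) := by
  have : Finite Y := Nat.finite_of_card_ne_zero (by omega)
  let e : Y ≃ Fin m := (Finite.equivFin Y).trans (finCongr hY)
  let f' : G →* Equiv.Perm (Fin m) := e.permCongrHom.toMonoidHom.comp f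
  have hf' : Function.Injective f' := e.permCongrHom.injective.comp hf
  have hidx : f'.range.index = 2 := by
    have h1 := f'.range.card_mul_index
    have h2 : Nat.card f'.range = Nat.card G :=
      Nat.card_congr (MonoidHom.ofInjective hf').toEquiv.symm
    rw [h2, Nat.card_perm, Nat.card_fin, ← hc, mul_comm 2] at h1
    exact Nat.eq_of_mul_eq_mul_left Nat.card_pos h1
  have := Equiv.Perm.eq_alternatingGroup_of_index_eq_two hidx
  exact ⟨(MonoidHom.ofInjective hf').trans (MulEquiv.subgroupCongr this)⟩

lemma perm_of_inj {G Y : Type*} [Group G] [Finite G] (m : ℕ) (hm : 2 ≤ m) (hY : Nat.card Y = m)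
    (f : G →* Equiv.Perm Y) (hf : Function.Injective f) (hc : Nat.card G = m.factorial) :
    Nonempty (G ≃* Equiv.Perm (Fin m)) := by
  have : Finite Y := Nat.finite_of_card_ne_zero (by omega)
  let e : Y ≃ Fin m := (Finite.equivFin Y).trans (finCongr hY)
  have hb : Function.Bijective f :=
    (Nat.bijective_iff_injective_and_card _).2 ⟨hf, by rw [hc, Nat.card_perm, hY]⟩
  exact ⟨(MulEquiv.ofBijective f hb).trans e.permCongrHom⟩
lemma rot_sort {Ω : Type*} [Fintype Ω] (k : ℕ) (hk : Fintype.card Ω = k) (c : Ω → ℕ) :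
    ∃ e : Fin k ≃ Ω, Monotone (c ∘ e) := by
  let e0 := (Fintype.equivFinOfCardEq hk).symm
  exact ⟨(Tuple.sort (c ∘ e0)).trans e0, Tuple.monotone_sort (c ∘ e0)⟩

lemma arith1 (n c d o p e f : ℕ) (he : e = 1 ∨ e = 2) (hf : f = 1 ∨ f = 2) (hc : 2 ≤ c)
    (hd : 2 ≤ d) (ho : 2 ≤ o) (hp : 2 ≤ p) (h1 : o * (e * c) = n) (h2 : p * (f * d) = n)
    (hs : n + o + p = 1 + o * c + p * d) :
    (n = 12 ∧ c = 2 ∧ d = 3 ∧ p = 4) ∨ (n = 12 ∧ d = 2 ∧ c = 3 ∧ o = 4) := by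
  have a1 : o * 2 ≤ o * c := Nat.mul_le_mul_left o hc
  have a2 : p * 2 ≤ p * d := Nat.mul_le_mul_left p hd
  have key : ∀ n c d o p : ℕ, 2 ≤ c → 2 ≤ d → 2 ≤ o → 2 ≤ p → o * c = n → 2 * (p * d) = n →
      n + o + p = 1 + o * c + p * d → (n = 12 ∧ d = 2 ∧ c = 3 ∧ o = 4) := by
    intro n c d o p hc hd ho hp h1 h2 hs
    have a2 : p * 2 ≤ p * d := Nat.mul_le_mul_left p hd
    have : c < 4 := by
      by_contra h
      have : o * 4 ≤ o * c := Nat.mul_le_mul_left o (by omega)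
      omega
    interval_cases c
    · omega
    · have : d < 3 := by
        by_contra h
        have : p * 3 ≤ p * d := Nat.mul_le_mul_left p (by omega)
        omega
      interval_cases d
      omega
  rcases he with rfl | rfl <;> rcases hf with rfl | rfl
  · simp only [one_mul] at h1 h2; omega
  · right; exact key n c d o p hc hd ho hp (by linarith) (by linarith) (by linarith)
  · left
    obtain ⟨x, y, z, w⟩ := key n d c p o hd hc hp ho (by linarith) (by linarith) (by linarith)
    exact ⟨x, y, z, w⟩
  · have e1 : 2 * (o * c) = n := by linarith
    have e2 : 2 * (p * d) = n := by linarith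
    omega

lemma arith2 (n c d b o p q e f g : ℕ) (he : e = 1 ∨ e = 2) (hf : f = 1 ∨ f = 2)
    (hg : g = 1 ∨ g = 2) (hc : 2 ≤ c)
    (hd : c ≤ d) (hb : d ≤ b) (ho : 2 ≤ o) (hp : 2 ≤ p) (hq : 2 ≤ q)
    (h1 : o * (e * c) = n) (h2 : p * (f * d) = n) (h3 : q * (g * b) = n)
    (hs : n + o + p + q = 1 + o * c + p * d + q * b) :
    c = 2 ∧ d = 3 ∧ e = 2 ∧ f = 2 ∧ g = 2 ∧
      (b = 3 ∧ n = 12 ∨ b = 4 ∧ n = 24 ∨ b = 5 ∧ n = 60) := by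
  have a1 : o * 2 ≤ o * c := Nat.mul_le_mul_left o hc
  have a2 : p * 2 ≤ p * d := Nat.mul_le_mul_left p (by omega)
  have a3 : q * 2 ≤ q * b := Nat.mul_le_mul_left q (by omega)
  have e1 : e * (o * c) = n := by linarith
  have e2 : f * (p * d) = n := by linarith
  have e3 : g * (q * b) = n := by linarith
  have : e = 2 ∧ f = 2 ∧ g = 2 := by
    rcases he with rfl | rfl <;> rcases hf with rfl | rfl <;> rcases hg with rfl | rfl <;> omega
  obtain ⟨rfl, rfl, rfl⟩ := this
  have hc3 : c < 3 := by
    by_contra h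
    have : o * 3 ≤ o * c := Nat.mul_le_mul_left o (by omega)
    have : p * 3 ≤ p * d := Nat.mul_le_mul_left p (by omega)
    have : q * 3 ≤ q * b := Nat.mul_le_mul_left q (by omega)
    omega
  obtain rfl : c = 2 := by omega
  have hd4 : d < 4 := by
    by_contra h
    have : p * 4 ≤ p * d := Nat.mul_le_mul_left p (by omega)
    have : q * 4 ≤ q * b := Nat.mul_le_mul_left q (by omega)
    omega
  interval_cases d
  · omega
  · have : b < 6 := by
      by_contra h
      have : q * 6 ≤ q * b := Nat.mul_le_mul_left q (by omega)
      omega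
    interval_cases b <;> omega

lemma arith {Ω : Type*} [Fintype Ω] (n : ℕ) (c o ε : Ω → ℕ) (hn1 : 1 < n)
    (hε : ∀ w, ε w = 1 ∨ ε w = 2) (hc : ∀ w, 2 ≤ c w)
    (ho : ∀ w, 2 ≤ o w) (hn : ∀ w, o w * (ε w * c w) = n)
    (hsum : n = 1 + ∑ w, o w * (c w - 1)) :
    (n = 12 ∧ ∃ e : Fin 2 ≃ Ω, c (e 0) = 2 ∧ c (e 1) = 3 ∧ o (e 1) = 4) ∨
    ∃ e : Fin 3 ≃ Ω, c (e 0) = 2 ∧ c (e 1) = 3 ∧ (∀ w, ε w = 2) ∧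
      (c (e 2) = 3 ∧ n = 12 ∨ c (e 2) = 4 ∧ n = 24 ∨ c (e 2) = 5 ∧ n = 60) := by
  have hsub : ∀ w, o w * (c w - 1) + o w = o w * c w := by
    intro w
    obtain ⟨d, hd⟩ : ∃ d, c w = d + 1 := ⟨c w - 1, by have := hc w; omega⟩
    rw [hd]; simp; ring
  have hlow : ∀ w, n ≤ 4 * (o w * (c w - 1)) := by
    intro w
    have h1 := hsub w
    have h2 : o w * 2 ≤ o w * c w := Nat.mul_le_mul_left _ (hc w)
    have h3 : ε w * (o w * c w) = n := by rw [← hn w]; ring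
    rcases hε w with h | h <;> rw [h] at h3 <;> omega
  have hk : Fintype.card Ω < 4 := by
    have : ∑ w : Ω, n ≤ ∑ w, 4 * (o w * (c w - 1)) := Finset.sum_le_sum fun w _ => hlow w
    rw [← Finset.mul_sum] at this
    simp only [Finset.sum_const, smul_eq_mul, Finset.card_univ] at this
    by_contra h
    have : 4 * n ≤ Fintype.card Ω * n := Nat.mul_le_mul_right n (by omega)
    omega
  obtain ⟨e, he⟩ := rot_sort (Fintype.card Ω) rfl c
  rw [← Equiv.sum_comp e] at hsum
  generalize Fintype.card Ω = k at *
  interval_cases k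
  · simp at hsum; omega
  · simp at hsum
    have := hsub (e 0); have h2 := hn (e 0); have := ho (e 0)
    have a1 : o (e 0) * 2 ≤ o (e 0) * c (e 0) := Nat.mul_le_mul_left _ (hc _)
    rcases hε (e 0) with h | h <;> rw [h] at h2
    · rw [one_mul] at h2; omega
    · rw [mul_left_comm] at h2; omega
  · left
    rw [Fin.sum_univ_two] at hsum
    have := hsub (e 0); have := hsub (e 1)
    rcases arith1 n (c (e 0)) (c (e 1)) (o (e 0)) (o (e 1)) (ε (e 0)) (ε (e 1)) (hε _) (hε _)
      (hc _) (hc _) (ho _) (ho _) (hn _) (hn _) (by omega) with h | h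
    · exact ⟨h.1, e, h.2⟩
    · exact ⟨h.1, (Equiv.swap 0 1).trans e, by simpa using h.2⟩
  · right
    rw [Fin.sum_univ_three] at hsum
    have := hsub (e 0); have := hsub (e 1); have := hsub (e 2)
    obtain ⟨h1, h2, h3, h4, h5, h6⟩ := arith2 n (c (e 0)) (c (e 1)) (c (e 2)) (o (e 0)) (o (e 1))
      (o (e 2)) (ε (e 0)) (ε (e 1)) (ε (e 2)) (hε _) (hε _) (hε _)
      (hc _) (he (by decide)) (he (by decide)) (ho _) (ho _) (ho _) (hn _) (hn _) (hn _) (by omega)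
    refine ⟨e, h1, h2, ?_, h6⟩
    intro w
    obtain ⟨i, rfl⟩ := e.surjective w
    fin_cases i
    · exact h3
    · exact h4
    · exact h5

lemma inj3 (f : Fin 3 → ℕ) (h0 : f 0 = 2) (h1 : f 1 = 3) (n2 : f 2 ≠ 2) (n3 : f 2 ≠ 3) :
    ∀ i j, f i = f j → i = j := by
  simp only [Fin.forall_fin_succ, Fin.forall_fin_zero]
  simp
  omega

lemma a5_of_simple {G : Type*} [Group G] [Finite G] (hc : Nat.card G = 60)
    (hs : ∀ N : Subgroup G, N.Normal → N = ⊥ ∨ N = ⊤) (h15 : Nat.card (Sylow 2 G) ≠ 15) :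
    Nonempty (G ≃* alternatingGroup (Fin 5)) := by
  have hP : ∀ P : Sylow 2 G, Nat.card P = 4 := by
    intro P
    rw [P.card_eq_multiplicity, hc]
    have : (60 : ℕ) = 2 ^ 2 * 15 := by norm_num
    rw [this, Nat.factorization_mul (by norm_num) (by norm_num), Nat.Prime.factorization_pow Nat.prime_two]
    have : Nat.factorization 15 2 = 0 := Nat.factorization_eq_zero_of_not_dvd (by norm_num)
    simp [this]
  obtain ⟨P⟩ : Nonempty (Sylow 2 G) := inferInstance
  have hidx : P.index = 15 := by
    have := P.card_mul_index
    rw [hP P, hc] at this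
    omega
  have hd := P.card_dvd_index
  rw [hidx] at hd
  let f := MulAction.toPermHom G (Sylow 2 G)
  have hPne : (P : Subgroup G) ≠ ⊤ := by
    intro h
    rw [h] at hidx
    simp at hidx
  have hPnb : (P : Subgroup G) ≠ ⊥ := by
    intro h
    have := hP P
    rw [h] at this
    simp at this
  have hf : Function.Injective f := by
    rw [← MonoidHom.ker_eq_bot_iff]
    rcases hs f.ker inferInstance with h | h
    · exact h
    · exfalso
      have hn : (P : Subgroup G).Normal := by
        rw [← Subgroup.normalizer_eq_top_iff, eq_top_iff]
        intro g _
        refine (Sylow.smul_eq_iff_mem_normalizer (P := P)).1 ?_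
        have : g ∈ f.ker := by rw [h]; trivial
        exact congrArg (fun k : Equiv.Perm (Sylow 2 G) => k P) this
      rcases hs _ hn with h | h
      · exact hPnb h
      · exact hPne h
  have hle : Nat.card G ≤ Nat.card (Equiv.Perm (Sylow 2 G)) := Nat.card_le_card_of_injective f hf
  rw [Nat.card_perm, hc] at hle
  have h5 : Nat.card (Sylow 2 G) = 5 := by
    have : Nat.card (Sylow 2 G) ∈ Nat.divisors 15 := by simp [hd]
    have h' : Nat.divisors 15 = {1, 3, 5, 15} := by decide
    rw [h'] at this
    simp only [Finset.mem_insert, Finset.mem_singleton] at this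
    rcases this with h | h | h | h
    · rw [h] at hle; simp at hle
    · rw [h] at hle; simp [Nat.factorial] at hle
    · exact h
    · exact absurd h h15
  exact alt_of_inj 5 (by norm_num) h5 f hf (by rw [hc]; rfl)

namespace RotPart
variable {G X : Type*} [Group G] [MulAction G X] [Finite G] [Finite X] (P : RotPart G X)

lemma pow_card (x : X) (g : G) (hg : g ∈ P.C x) : orderOf g ∣ Nat.card (P.C x) := by
  have := orderOf_dvd_natCard (⟨g, hg⟩ : P.C x)
  rwa [Subgroup.orderOf_mk] at this

lemma rep (x : X) : ∃ w : orbitRel.Quotient G X, ∃ h : G, x = h • w.out := by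
  refine ⟨Quotient.mk'' x, ?_⟩
  have h : (orbitRel G X) x (Quotient.mk'' x : orbitRel.Quotient G X).out :=
    (orbitRel G X).symm (Quotient.mk_out (s := orbitRel G X) x)
  rw [orbitRel_apply] at h
  obtain ⟨h, hh⟩ := h
  exact ⟨h, hh.symm⟩

lemma out_inj (w v : orbitRel.Quotient G X) (h : G) (hh : v.out = h • w.out) : w = v := by
  rw [← Quotient.out_eq' w, ← Quotient.out_eq' v]
  symm
  apply Quotient.sound'
  exact (orbitRel_apply (G := G)).2 ⟨h, hh.symm⟩

/-- axes with centralizers of the same size are conjugate, if sizes separate orbits -/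
lemma same_orbit (hinj : Function.Injective fun w : orbitRel.Quotient G X => Nat.card (P.C w.out))
    (x y : X) (hxy : Nat.card (P.C x) = Nat.card (P.C y)) : ∃ h : G, h • x = y := by
  obtain ⟨w, a, rfl⟩ := rep (G := G) x
  obtain ⟨v, b, rfl⟩ := rep (G := G) y
  rw [P.card_smul, P.card_smul] at hxy
  obtain rfl := hinj hxy
  exact ⟨b * a⁻¹, by simp [mul_smul]⟩

lemma simple60 [Fintype (orbitRel.Quotient G X)] (hG : Nat.card G = 60)
    (e : Fin 3 ≃ orbitRel.Quotient G X)
    (h2 : Nat.card (P.C (e 0).out) = 2) (h3 : Nat.card (P.C (e 1).out) = 3)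
    (h5 : Nat.card (P.C (e 2).out) = 5)
    (o2 : Nat.card (orbit G (e 0).out) = 15) (o3 : Nat.card (orbit G (e 1).out) = 10)
    (o5 : Nat.card (orbit G (e 2).out) = 6) (N : Subgroup G) (hN : N.Normal) :
    N = ⊥ ∨ N = ⊤ := by
  have hc := P.count N
  rw [← Equiv.sum_comp e, Fin.sum_univ_three, o2, o3, o5] at hc
  have d2 : Nat.card (P.C (e 0).out ⊓ N : Subgroup G) ∣ 2 :=
    (Subgroup.card_dvd_of_le inf_le_left).trans h2.dvd
  have d3 : Nat.card (P.C (e 1).out ⊓ N : Subgroup G) ∣ 3 :=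
    (Subgroup.card_dvd_of_le inf_le_left).trans h3.dvd
  have d5 : Nat.card (P.C (e 2).out ⊓ N : Subgroup G) ∣ 5 :=
    (Subgroup.card_dvd_of_le inf_le_left).trans h5.dvd
  have hd := N.card_subgroup_dvd_card
  rw [hG] at hd
  have : Nat.card N = 1 ∨ Nat.card N = 60 := by
    rcases (Nat.dvd_prime Nat.prime_two).1 d2 with a | a <;>
    rcases (Nat.dvd_prime Nat.prime_three).1 d3 with b | b <;>
    rcases (Nat.dvd_prime Nat.prime_five).1 d5 with c | c <;>
    rw [a, b, c] at hc <;> generalize Nat.card N = k at hc hd ⊢ <;> norm_num at hc <;>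
    subst hc <;> revert hd <;> decide
  rcases this with h | h
  · left; exact Subgroup.card_eq_one.1 h
  · right; exact Subgroup.eq_top_of_card_eq _ (by rw [h, hG])

lemma sylow60 (hG : Nat.card G = 60)
    (hinj : Function.Injective fun w : orbitRel.Quotient G X => Nat.card (P.C w.out))
    (hall : ∀ x, Nat.card (P.C x) = 2 ∨ Nat.card (P.C x) = 3 ∨ Nat.card (P.C x) = 5) :
    Nat.card (Sylow 2 G) ≠ 15 := by
  intro h15
  obtain ⟨S⟩ : Nonempty (Sylow 2 G) := inferInstance
  rw [S.card_eq_index_normalizer] at h15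
  have hSi : S.index = 15 := by
    have h1 : (Subgroup.normalizer (S : Set G)).index ∣ S.index :=
      Subgroup.index_dvd_of_le Subgroup.le_normalizer
    have h2 := S.card_mul_index
    have h3 : ¬ 2 ∣ S.index := S.not_dvd_index
    rw [h15] at h1
    obtain ⟨k, hk⟩ := h1
    have h4 : k ∣ 4 := by
      rw [hG, hk] at h2
      refine ⟨Nat.card S, ?_⟩
      have : 15 * (k * Nat.card S) = 60 := by rw [← h2]; ring
      omega
    have h5 : ¬ 2 ∣ k := fun h => h3 (hk ▸ Dvd.dvd.mul_left h 15)
    have : k ≤ 4 := Nat.le_of_dvd (by norm_num) h4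
    interval_cases k <;> omega
  have hS4 : Nat.card S = 4 := by
    have := S.card_mul_index
    rw [hSi, hG] at this
    omega
  have hNS : Subgroup.normalizer (S : Set G) = (S : Subgroup G) := by
    symm
    apply Subgroup.eq_of_le_of_card_ge Subgroup.le_normalizer
    have h1 := (Subgroup.normalizer (S : Set G)).card_mul_index
    rw [h15, hG] at h1
    refine le_of_eq ?_
    rw [hS4]
    exact Nat.eq_of_mul_eq_mul_right (by norm_num : 0 < 15) h1
  have hcomm : IsMulCommutative S := IsPGroup.isMulCommutative_of_card_eq_prime_sq (p := 2) hS4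
  have htwo : ∀ t ∈ S, t ≠ 1 → ∀ x, t ∈ P.C x → Nat.card (P.C x) = 2 := by
    intro t ht h1 x hx
    have d1 : orderOf t ∣ 4 := by
      have := orderOf_dvd_natCard (⟨t, ht⟩ : (S : Subgroup G))
      rw [hS4] at this
      rwa [Subgroup.orderOf_mk] at this
    have d2 := P.pow_card x t hx
    rcases hall x with h | h | h
    · exact h
    · rw [h] at d2
      exact absurd (orderOf_eq_one_iff.1 (Nat.dvd_one.1 (by simpa using Nat.dvd_gcd d1 d2))) h1
    · rw [h] at d2
      exact absurd (orderOf_eq_one_iff.1 (Nat.dvd_one.1 (by simpa using Nat.dvd_gcd d1 d2))) h1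
  obtain ⟨t, ht, s, hs, ht1, hs1, hts⟩ : ∃ t ∈ S, ∃ s ∈ S, t ≠ 1 ∧ s ≠ 1 ∧ t ≠ s := by
    have h3 : 2 < (Set.univ : Set S).ncard := by rw [Set.ncard_univ, hS4]; norm_num
    obtain ⟨a, b, c, _, _, _, hab, hac, hbc⟩ := (Set.two_lt_ncard_iff).1 h3
    have hab' : (a : G) ≠ b := fun h => hab (Subtype.ext h)
    have hac' : (a : G) ≠ c := fun h => hac (Subtype.ext h)
    have hbc' : (b : G) ≠ c := fun h => hbc (Subtype.ext h)
    by_cases ha : (a : G) = 1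
    · exact ⟨b, b.2, c, c.2, fun h => hab' (ha.trans h.symm), fun h => hac' (ha.trans h.symm), hbc'⟩
    · by_cases hb : (b : G) = 1
      · exact ⟨a, a.2, c, c.2, ha, fun h => hbc' (hb.trans h.symm), hac'⟩
      · exact ⟨a, a.2, b, b.2, ha, hb, hab'⟩
  obtain ⟨x, hx⟩ := P.ex t ht1
  obtain ⟨y, hy⟩ := P.ex s hs1
  have hcy := htwo s hs hs1 y hy
  obtain ⟨h, rfl⟩ := P.same_orbit hinj x y ((htwo t ht ht1 x hx).trans hcy.symm)
  have hconj : h * t * h⁻¹ = s := by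
    obtain ⟨a, b, hab, huniv⟩ := Nat.card_eq_two_iff.1 hcy
    have hm : ∀ z : P.C (h • x), z = a ∨ z = b := fun z => by
      have : z ∈ ({a, b} : Set (P.C (h • x))) := by rw [huniv]; trivial
      simpa using this
    have h1 := hm 1
    have h2 := hm ⟨_, P.conj t h x hx⟩
    have h3 := hm ⟨s, hy⟩
    have n2 : (⟨_, P.conj t h x hx⟩ : P.C (h • x)) ≠ 1 := fun H =>
      ht1 (by simpa using congrArg Subtype.val H)
    have n3 : (⟨s, hy⟩ : P.C (h • x)) ≠ 1 := fun H => hs1 (congrArg Subtype.val H)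
    have : (⟨_, P.conj t h x hx⟩ : P.C (h • x)) = ⟨s, hy⟩ := by
      rcases h1 with h1 | h1 <;> rcases h2 with h2 | h2 <;> rcases h3 with h3 | h3 <;>
        first
        | exact absurd (h2.trans h1.symm) n2
        | exact absurd (h3.trans h1.symm) n3
        | exact h2.trans h3.symm
    exact congrArg Subtype.val this
  obtain ⟨n, hn, hn2⟩ := S.conj_eq_normalizer_conj_of_mem t h⁻¹ ht (by simpa [hconj] using hs)
  rw [inv_inv, hconj] at hn2
  rw [hNS] at hn
  have hc : t * n = n * t :=
    congrArg Subtype.val (hcomm.is_comm.comm (⟨t, ht⟩ : S) ⟨n, hn⟩)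
  rw [mul_assoc, hc, inv_mul_cancel_left] at hn2
  exact hts hn2.symm

theorem main [Nontrivial G] :
    (Nonempty (G ≃* alternatingGroup (Fin 4)) ∨ Nonempty (G ≃* Equiv.Perm (Fin 4)) ∨
      Nonempty (G ≃* alternatingGroup (Fin 5))) ∧ ∀ x, IsCyclic (P.C x) := by
  classical
  have : Fintype (orbitRel.Quotient G X) := Fintype.ofFinite _
  choose ε hε hstab using P.idx
  have hmul : ∀ x, Nat.card (orbit G x) * (ε x * Nat.card (P.C x)) = Nat.card G := by
    intro x; rw [← hstab, orb_mul]
  have htop := P.count ⊤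
  simp only [inf_top_eq, Subgroup.card_top] at htop
  have hprime : ∀ (p : ℕ), p.Prime → ∀ x, Nat.card (P.C x) = p → IsCyclic (P.C x) := by
    intro p hp x hx
    have : Fact p.Prime := ⟨hp⟩
    exact isCyclic_of_prime_card hx
  have hcases := arith (Nat.card G) (fun w : orbitRel.Quotient G X => Nat.card (P.C w.out))
    (fun w => Nat.card (orbit G w.out)) (fun w => ε w.out) Finite.one_lt_card
    (fun w => hε _) (fun w => P.two_le _) (fun w => P.orb_two_le _) (fun w => hmul _) htop
  rcases hcases with ⟨hG, e, h2, h3, ho⟩ | ⟨e, h2, h3, hε2, hb⟩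
  · refine ⟨Or.inl (alt_of_inj 4 (by norm_num) ho _ (P.faithful3 _ h3) (by rw [hG]; rfl)), ?_⟩
    intro x
    obtain ⟨w, h, hx⟩ := rep (G := G) x
    obtain ⟨i, rfl⟩ := e.surjective w
    have hcx : Nat.card (P.C x) = Nat.card (P.C (e i).out) := by rw [hx, P.card_smul]
    fin_cases i
    · exact hprime 2 Nat.prime_two x (hcx.trans h2)
    · exact hprime 3 Nat.prime_three x (hcx.trans h3)
  · have hinj : Nat.card (P.C (e 2).out) ≠ 2 → Nat.card (P.C (e 2).out) ≠ 3 →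
        Function.Injective fun w : orbitRel.Quotient G X => Nat.card (P.C w.out) := by
      intro n2 n3 w v hwv
      obtain ⟨i, rfl⟩ := e.surjective w
      obtain ⟨j, rfl⟩ := e.surjective v
      exact congrArg e (inj3 (fun i => Nat.card (P.C (e i).out)) h2 h3 n2 n3 i j hwv)
    have hall : ∀ x, Nat.card (P.C x) = 2 ∨ Nat.card (P.C x) = 3 ∨
        Nat.card (P.C x) = Nat.card (P.C (e 2).out) := by
      intro x
      obtain ⟨w, h, hx⟩ := rep (G := G) x
      obtain ⟨i, rfl⟩ := e.surjective w
      have hcx : Nat.card (P.C x) = Nat.card (P.C (e i).out) := by rw [hx, P.card_smul]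
      fin_cases i
      · exact Or.inl (hcx.trans h2)
      · exact Or.inr (Or.inl (hcx.trans h3))
      · exact Or.inr (Or.inr hcx)
    have ho : ∀ w : orbitRel.Quotient G X,
        Nat.card (orbit G w.out) * (2 * Nat.card (P.C w.out)) = Nat.card G := by
      intro w; rw [← hmul w.out, hε2 w]
    have m2 := ho (e 0)
    have m3 := ho (e 1)
    have mb := ho (e 2)
    rw [h2] at m2
    rw [h3] at m3
    rcases hb with ⟨hb, hG⟩ | ⟨hb, hG⟩ | ⟨hb, hG⟩
    · exfalso
      have hf : Nat.factorization (Nat.card G) 3 = 1 := by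
        have : (12 : ℕ) = 3 ^ 1 * 4 := by norm_num
        rw [hG, this, Nat.factorization_mul (by norm_num) (by norm_num),
          Nat.Prime.factorization_pow Nat.prime_three]
        have : Nat.factorization 4 3 = 0 := Nat.factorization_eq_zero_of_not_dvd (by norm_num)
        simp [this]
      have : Fact (Nat.Prime 3) := ⟨Nat.prime_three⟩
      let S1 : Sylow 3 G := Sylow.ofCard (P.C (e 1).out) (by rw [hf, h3]; rfl)
      let S2 : Sylow 3 G := Sylow.ofCard (P.C (e 2).out) (by rw [hf, hb]; rfl)
      obtain ⟨g, hg⟩ := MulAction.exists_smul_eq G S1 S2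
      obtain ⟨u, hu, hu1⟩ := P.nb (e 1).out
      have hu2 : g * u * g⁻¹ ∈ S2 := by
        rw [← hg]
        exact ⟨u, hu, rfl⟩
      have hu3 : g * u * g⁻¹ ∈ P.C (e 2).out := hu2
      have := P.uniq _ (by simpa using hu1) _ _ hu3 (P.conj u g _ hu)
      have := e.injective (out_inj _ _ g this)
      exact absurd this (by decide)
    · have ho4 : Nat.card (orbit G (e 1).out) = 4 := by omega
      have hiso := perm_of_inj 4 (by norm_num) ho4 _ (P.faithful3 _ h3) (by rw [hG]; rfl)
      refine ⟨Or.inr (Or.inl hiso), ?_⟩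
      obtain ⟨φ⟩ := hiso
      rw [hb] at hall
      have hinj' := hinj (by omega) (by omega)
      intro x
      rcases hall x with h | h | h
      · exact hprime 2 Nat.prime_two x h
      · exact hprime 3 Nat.prime_three x h
      have hs : orderOf (φ.symm (finRotate 4)) = 4 := by
        rw [MulEquiv.orderOf_eq]
        exact orderOf_eq_prime_pow (p := 2) (n := 1) (by decide) (by decide)
      obtain ⟨y, hy⟩ := P.ex (φ.symm (finRotate 4)) (by intro h; rw [h] at hs; simp at hs)
      have hd := P.pow_card y _ hy
      rw [hs] at hd
      have hy4 : Nat.card (P.C y) = 4 := by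
        rcases hall y with h | h | h
        · rw [h] at hd; exact absurd hd (by decide)
        · rw [h] at hd; exact absurd hd (by decide)
        · exact h
      obtain ⟨g, rfl⟩ := P.same_orbit hinj' y x (hy4.trans h.symm)
      refine isCyclic_of_card_le_orderOf ⟨_, P.conj _ g _ hy⟩ ?_
      rw [Subgroup.orderOf_mk, h]
      have : g * φ.symm (finRotate 4) * g⁻¹ = MulAut.conj g (φ.symm (finRotate 4)) := rfl
      rw [this, MulEquiv.orderOf_eq, hs]
    · rw [hb] at mb
      refine ⟨Or.inr (Or.inr ?_), ?_⟩
      · exact a5_of_simple hG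
          (P.simple60 hG e h2 h3 hb (by omega) (by omega) (by omega))
          (P.sylow60 hG (hinj (by omega) (by omega)) (by rw [hb] at hall; exact hall))
      · intro x
        rw [hb] at hall
        rcases hall x with h | h | h
        · exact hprime 2 Nat.prime_two x h
        · exact hprime 3 Nat.prime_three x h
        · exact hprime 5 Nat.prime_five x h

end RotPart

/-- the set of axes of a 3D-rotation module -/
def RotAxes {G V : Type*} [Group G] [AddCommGroup V] [DistribMulAction G V]
    (M : Rotation3DModule G V) : Type _ := {A : AddSubgroup V // ∃ g : G, g ≠ 1 ∧ M.axis g = A}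

lemma rot_conj {G V : Type*} [Group G] [AddCommGroup V] [DistribMulAction G V]
    (M : Rotation3DModule G V) (g h : G) (hg : g ≠ 1) :
    h • M.axis g = M.axis (h * g * h⁻¹) := by
  by_cases hh : h = 1
  · subst hh; simp
  · exact M.axis_conj g h hg hh

instance rotAxesAction {G V : Type*} [Group G] [AddCommGroup V] [DistribMulAction G V]
    (M : Rotation3DModule G V) : MulAction G (RotAxes M) where
  smul h A := ⟨h • A.1, by
    obtain ⟨g, hg, hA⟩ := A.2
    exact ⟨h * g * h⁻¹, by simpa using hg, by rw [← hA, rot_conj M g h hg]⟩⟩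
  one_smul A := Subtype.ext (one_smul G A.1)
  mul_smul a b A := Subtype.ext (mul_smul a b A.1)

lemma rot_smul_val {G V : Type*} [Group G] [AddCommGroup V] [DistribMulAction G V]
    (M : Rotation3DModule G V) (h : G) (A : RotAxes M) : (h • A).1 = h • A.1 := rfl

/-- `h ≠ 1` centralizes an axis exactly when it is the axis of `h`. -/
lemma rot_mem {G V : Type*} [Group G] [AddCommGroup V] [DistribMulAction G V]
    (M : Rotation3DModule G V) (h : G) (hh : h ≠ 1) (A : RotAxes M) :
    h ∈ axisCent G A.1 ↔ M.axis h = A.1 := by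
  obtain ⟨A, g, hg, rfl⟩ := A
  exact M.cent_iff g h hg hh

def rotPart {G V : Type*} [Group G] [AddCommGroup V] [DistribMulAction G V]
    (M : Rotation3DModule G V)
    (hnonaxial : ∀ g : G, g ≠ 1 → ∃ h : G, h • M.axis g ≠ M.axis g) :
    RotPart G (RotAxes M) where
  C A := axisCent G A.1
  ex g hg := ⟨⟨M.axis g, g, hg, rfl⟩, (rot_mem M g hg _).2 rfl⟩
  uniq g hg x y hx hy :=
    Subtype.ext (((rot_mem M g hg x).1 hx).symm.trans ((rot_mem M g hg y).1 hy))
  nb x := by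
    obtain ⟨g, hg, hx⟩ := x.2
    exact ⟨g, (rot_mem M g hg x).2 hx, hg⟩
  conj g h x hx := by
    intro v hv
    rw [rot_smul_val, AddSubgroup.mem_smul_pointwise_iff_exists] at hv
    obtain ⟨w, hw, rfl⟩ := hv
    rw [mul_smul, mul_smul, inv_smul_smul, hx w hw]
  le x := by
    intro h hx
    by_cases hh : h = 1
    · subst hh; exact one_mem _
    · have hax := (rot_mem M h hh x).1 hx
      refine Subtype.ext ?_
      rw [rot_smul_val, ← hax, rot_conj M h h hh]
      simp
  mul x a ha b hb hax hbx := by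
    have inv : ∀ a ∈ MulAction.stabilizer G x, a ∉ axisCent G x.1 → ∀ v ∈ x.1, a • v = -v := by
      intro a ha hax
      have ha1 : a ≠ 1 := fun h => hax (by rw [h]; exact one_mem _)
      have hs : a • x.1 = x.1 := congrArg Subtype.val ha
      obtain ⟨A, g, hg, rfl⟩ := x
      exact M.norm_inverts g a hg ha1 hs hax
    intro v hv
    rw [mul_smul, inv b hb hbx v hv, smul_neg, inv a ha hax v hv, neg_neg]
  nofix x := by
    obtain ⟨A, g, hg, rfl⟩ := x
    obtain ⟨h, hh⟩ := hnonaxial g hg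
    exact ⟨h, fun H => hh (congrArg Subtype.val H)⟩

lemma rotAxes_finite {G V : Type*} [Group G] [Finite G] [AddCommGroup V] [DistribMulAction G V]
    (M : Rotation3DModule G V) : Finite (RotAxes M) := by
  refine Finite.of_surjective
    (fun g : {g : G // g ≠ 1} => (⟨M.axis g.1, g.1, g.2, rfl⟩ : RotAxes M)) ?_
  rintro ⟨A, g, hg, rfl⟩
  exact ⟨⟨g, hg⟩, rfl⟩

/-- a nontrivial finite group with a nonaxial 3D-rotation module is
isomorphic to `Alt(4)`, `Sym(4)`, or `Alt(5)`, and the centralizer of each axis is cyclic. -/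
theorem stmt14 {G V : Type*} [Group G] [Finite G] [Nontrivial G]
    [AddCommGroup V] [DistribMulAction G V] (M : Rotation3DModule G V)
    (hnonaxial : ∀ g : G, g ≠ 1 → ∃ h : G, h • M.axis g ≠ M.axis g) :
    (Nonempty (G ≃* alternatingGroup (Fin 4)) ∨ Nonempty (G ≃* Equiv.Perm (Fin 4)) ∨
      Nonempty (G ≃* alternatingGroup (Fin 5))) ∧
    ∀ g : G, g ≠ 1 → IsCyclic (axisCent G (M.axis g)) := by
  have := rotAxes_finite M
  obtain ⟨h1, h2⟩ := (rotPart M hnonaxial).main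
  exact ⟨h1, fun g hg => h2 ⟨M.axis g, g, hg, rfl⟩⟩
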